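/- Let N < N' be two consecutive colossally abundant numbers and suppose there exists an extremely abundant number n with 10080 < n and N < n < N'. Assuming Robin's proposition that for all m with 3 ≤ N ≤ m ≤ N', f(m) ≤ max{f(N), f(N')} where f(m) = σ(m)/(m·log log m), it follows that N' is extremely abundant. -/

import Mathlib

open Real Finset

noncomputable section

/-- Sum of divisors of `n`. -/
def sigma1 (n : ℕ) : ℕ := n.divisors.sum id

/-- `n` is superabundant if `σ(n)/n > σ(m)/m` for all positive `m < n`. -/
def Superabundant (n : ℕ) : Prop :=
  0 < n ∧ ∀ m : ℕ, 0 < m → m < n → (sigma1 m : ℝ) / m < (sigma1 n : ℝ) / n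

/-- Robin's quotient `f(n) = σ(n)/(n log log n)`. -/
def robinF (n : ℕ) : ℝ := (sigma1 n : ℝ) / (n * Real.log (Real.log n))

/-- `n` is extremely abundant. -/
def ExtremelyAbundant (n : ℕ) : Prop :=
  n = 10080 ∨ (10080 < n ∧ ∀ m : ℕ, 10080 ≤ m → m < n → robinF m < robinF n)
/-- `N` is colossally abundant. -/
def ColossallyAbundant (N : ℕ) : Prop :=
  0 < N ∧ ∃ ε : ℝ, 0 < ε ∧ ∀ m : ℕ, 1 < m →
    (sigma1 m : ℝ) / (m : ℝ) ^ ((1 : ℝ) + ε) ≤ (sigma1 N : ℝ) / (N : ℝ) ^ ((1 : ℝ) + ε)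

lemma sigma1_eq_sigma (n : ℕ) : sigma1 n = ArithmeticFunction.sigma 1 n := by
  simp [sigma1, ArithmeticFunction.sigma_one_apply]

lemma sigma1_pos {n : ℕ} (hn : 0 < n) : 0 < sigma1 n := by
  rw [sigma1_eq_sigma]
  exact ArithmeticFunction.sigma_pos 1 n hn.ne'

/-! ### The extremal problem defining colossally abundant numbers -/

lemma sigma1_le_mul_one_add_log (n : ℕ) : (sigma1 n : ℝ) ≤ n * (1 + log n) := by
  have h : (sigma1 n : ℝ) ≤ n * (harmonic n : ℝ) := by
    have hsum : (sigma1 n : ℝ) = ∑ d ∈ n.divisors, (n : ℝ) * (d : ℝ)⁻¹ := by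
      rw [sigma1_eq_sigma, ArithmeticFunction.sigma_eq_sum_div]
      push_cast
      refine Finset.sum_congr rfl fun d hd => ?_
      rw [pow_one, Nat.cast_div (Nat.dvd_of_mem_divisors hd)
        (by exact_mod_cast (Nat.pos_of_mem_divisors hd).ne'), div_eq_mul_inv]
    rw [hsum, harmonic_eq_sum_Icc, ← Finset.mul_sum]
    push_cast
    refine mul_le_mul_of_nonneg_left ?_ n.cast_nonneg
    refine Finset.sum_le_sum_of_subset_of_nonneg (fun d hd => ?_) (fun _ _ _ => by positivity)
    exact Finset.mem_Icc.2 ⟨Nat.pos_of_mem_divisors hd, Nat.divisor_le hd⟩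
  exact h.trans (mul_le_mul_of_nonneg_left (harmonic_le_one_add_log n) n.cast_nonneg)

lemma tendsto_sigma1_div_rpow {ε : ℝ} (hε : 0 < ε) :
    Filter.Tendsto (fun m : ℕ => (sigma1 m : ℝ) / (m : ℝ) ^ (1 + ε)) Filter.atTop (nhds 0) := by
  have hlim : Filter.Tendsto (fun x : ℝ => (1 + log x) / x ^ ε) Filter.atTop (nhds 0) := by
    have h₁ := (isLittleO_log_rpow_atTop hε).tendsto_div_nhds_zero
    have h₂ := (tendsto_rpow_atTop hε).inv_tendsto_atTop
    simpa [add_div] using h₂.add h₁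
  refine squeeze_zero' (Filter.Eventually.of_forall fun m => by positivity) ?_
    (hlim.comp tendsto_natCast_atTop_atTop)
  filter_upwards [Filter.eventually_gt_atTop 0] with m hm
  have hm' : (0 : ℝ) < m := by exact_mod_cast hm
  rw [Function.comp_apply, rpow_add hm', rpow_one, div_le_div_iff₀ (by positivity) (by positivity)]
  nlinarith [mul_le_mul_of_nonneg_right (sigma1_le_mul_one_add_log m) (rpow_pos_of_pos hm' ε).le]

/-- For every exponent `ε > 0` the quotient `σ(m)/m^{1+ε}` attains its maximum over `m > 1`. -/
lemma exists_maximizer {ε : ℝ} (hε : 0 < ε) :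
    ∃ M : ℕ, 1 < M ∧ ∀ m : ℕ, 1 < m →
      (sigma1 m : ℝ) / (m : ℝ) ^ (1 + ε) ≤ (sigma1 M : ℝ) / (M : ℝ) ^ (1 + ε) := by
  have h2 : (0 : ℝ) < (sigma1 2 : ℝ) / ((2 : ℕ) : ℝ) ^ (1 + ε) := by
    have := sigma1_pos two_pos
    positivity
  obtain ⟨K, hK⟩ := Filter.eventually_atTop.1 ((tendsto_sigma1_div_rpow hε).eventually_lt_const h2)
  obtain ⟨M, hM, hmax⟩ := Finset.exists_max_image (Finset.Icc 2 (K + 2))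
    (fun m : ℕ => (sigma1 m : ℝ) / (m : ℝ) ^ (1 + ε)) ⟨2, by simp⟩
  refine ⟨M, (Finset.mem_Icc.1 hM).1, fun m hm => ?_⟩
  by_cases hmK : m ≤ K + 2
  · exact hmax m (Finset.mem_Icc.2 ⟨hm, hmK⟩)
  · exact (hK m (by omega)).le.trans (hmax 2 (by simp))

lemma log_quotient_le {ε : ℝ} {a b : ℕ} (ha : 0 < a) (hb : 0 < b)
    (h : (sigma1 a : ℝ) / (a : ℝ) ^ (1 + ε) ≤ (sigma1 b : ℝ) / (b : ℝ) ^ (1 + ε)) :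
    log (sigma1 a / a) - ε * log a ≤ log (sigma1 b / b) - ε * log b := by
  have key : ∀ {c : ℕ}, 0 < c →
      log ((sigma1 c : ℝ) / (c : ℝ) ^ (1 + ε)) = log (sigma1 c / c) - ε * log c := by
    intro c hc
    have hc' : (0 : ℝ) < c := by exact_mod_cast hc
    have hs : (0 : ℝ) < sigma1 c := by exact_mod_cast sigma1_pos hc
    rw [log_div hs.ne' (by positivity), log_div hs.ne' hc'.ne', log_rpow hc']
    ring
  rw [← key ha, ← key hb]
  have ha' : (0 : ℝ) < a := by exact_mod_cast ha
  have hs : (0 : ℝ) < sigma1 a := by exact_mod_cast sigma1_pos ha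
  exact log_le_log (by positivity) h

/-! ### Robin's quotient between consecutive colossally abundant numbers -/

lemma one_lt_log_of_three_le {n : ℕ} (hn : 3 ≤ n) : 1 < log n := by
  have h3 : (3 : ℝ) ≤ n := by exact_mod_cast hn
  rw [lt_log_iff_exp_lt (by linarith)]
  linarith [exp_one_lt_d9]

lemma log_robinF {n : ℕ} (hn : 3 ≤ n) :
    log (robinF n) = log (sigma1 n / n) - log (log (log n)) := by
  have hn' : (0 : ℝ) < n := by exact_mod_cast (by omega : 0 < n)
  have hs : (0 : ℝ) < sigma1 n := by exact_mod_cast sigma1_pos (by omega : 0 < n)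
  rw [robinF, ← div_div, log_div (by positivity) (log_pos (one_lt_log_of_three_le hn)).ne']

lemma robinF_pos {n : ℕ} (hn : 3 ≤ n) : 0 < robinF n := by
  have hn' : (0 : ℝ) < n := by exact_mod_cast (by omega : 0 < n)
  have hs : (0 : ℝ) < sigma1 n := by exact_mod_cast sigma1_pos (by omega : 0 < n)
  have hl := log_pos (one_lt_log_of_three_le hn)
  unfold robinF
  positivity

lemma strictConcaveOn_log_log : StrictConcaveOn ℝ (Set.Ioi 1) fun x : ℝ => log (log x) := by
  refine ⟨convex_Ioi 1, fun x hx y hy hxy a b ha hb hab => ?_⟩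
  rw [Set.mem_Ioi] at hx hy
  have hlx := log_pos hx
  have hly := log_pos hy
  have h₁ := strictConcaveOn_log_Ioi.2 (Set.mem_Ioi.2 (zero_lt_one.trans hx))
    (Set.mem_Ioi.2 (zero_lt_one.trans hy)) hxy ha hb hab
  have h₂ := strictConcaveOn_log_Ioi.concaveOn.2 (Set.mem_Ioi.2 hlx) (Set.mem_Ioi.2 hly)
    ha.le hb.le hab
  simp only [smul_eq_mul] at h₁ h₂ ⊢
  exact h₂.trans_lt (log_lt_log (by positivity) h₁)

/-- Strict form of Robin's inequality: strictly between two consecutive colossally abundant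
numbers, Robin's quotient stays below the larger of its values at the two ends. -/
lemma robinF_lt_max {N N' m : ℕ} (hN : ColossallyAbundant N) (hN' : ColossallyAbundant N')
    (hcons : ∀ m : ℕ, N < m → m < N' → ¬ ColossallyAbundant m) (h3 : 3 ≤ N)
    (hNm : N < m) (hmN' : m < N') : robinF m < max (robinF N) (robinF N') := by
  by_contra! hle
  obtain ⟨hle₁, hle₂⟩ := max_le_iff.1 hle
  have hlog₁ := log_le_log (robinF_pos h3) hle₁
  have hlog₂ := log_le_log (robinF_pos (by omega)) hle₂
  rw [log_robinF h3, log_robinF (by omega)] at hlog₁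
  rw [log_robinF (by omega), log_robinF (by omega)] at hlog₂
  obtain ⟨-, ε₁, -, hε₁⟩ := hN
  obtain ⟨-, ε₂, -, hε₂⟩ := hN'
  have ht : 1 < log (N : ℝ) := one_lt_log_of_three_le h3
  have hu : log (N : ℝ) < log m :=
    log_lt_log (by exact_mod_cast (by omega : 0 < N)) (by exact_mod_cast hNm)
  have hv : log (m : ℝ) < log N' :=
    log_lt_log (by exact_mod_cast (by omega : 0 < m)) (by exact_mod_cast hmN')
  obtain ⟨ε, hε₂', hε₁'⟩ := exists_between <| strictConcaveOn_log_log.slope_anti_adjacent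
    (Set.mem_Ioi.2 ht) (Set.mem_Ioi.2 (ht.trans (hu.trans hv))) hu hv
  have hε : 0 < ε := by
    refine lt_trans (div_pos (sub_pos.2 ?_) (sub_pos.2 hv)) hε₂'
    exact log_lt_log (log_pos (ht.trans hu)) (log_lt_log (by linarith) hv)
  rw [div_lt_iff₀ (sub_pos.2 hv)] at hε₂'
  rw [lt_div_iff₀ (sub_pos.2 hu)] at hε₁'
  have hc₁ := log_quotient_le (by omega) (by omega) (hε₁ m (by omega))
  have hc₂ := log_quotient_le (by omega) (by omega) (hε₂ m (by omega))
  have hlt₁ : ε < ε₁ := by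
    refine lt_of_mul_lt_mul_right ?_ (sub_pos.2 hu).le
    linarith
  have hlt₂ : ε₂ < ε := by
    refine lt_of_mul_lt_mul_right ?_ (sub_pos.2 hv).le
    linarith
  obtain ⟨M, hM, hmax⟩ := exists_maximizer hε
  have hMpos : (0 : ℝ) < M := by exact_mod_cast (by omega : 0 < M)
  have hMN : N ≤ M := by
    by_contra! hcon
    have hlog : log (M : ℝ) < log N := log_lt_log hMpos (by exact_mod_cast hcon)
    have h₁ := log_quotient_le (by omega) (by omega) (hε₁ M hM)
    have h₂ := log_quotient_le (by omega) (by omega) (hmax N (by omega))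
    nlinarith
  have hMN' : M ≤ N' := by
    by_contra! hcon
    have hlog : log (N' : ℝ) < log M :=
      log_lt_log (by exact_mod_cast (by omega : 0 < N')) (by exact_mod_cast hcon)
    have h₁ := log_quotient_le (by omega) (by omega) (hε₂ M hM)
    have h₂ := log_quotient_le (by omega) (by omega) (hmax N' (by omega))
    nlinarith
  have hMm := log_quotient_le (by omega) (by omega) (hmax m (by omega))
  rcases hMN.eq_or_lt with rfl | hMN
  · linarith
  rcases hMN'.eq_or_lt with rfl | hMN'
  · linarith
  exact hcons M hMN hMN' ⟨by omega, ε, hε, hmax⟩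

/-! ### A multiplicative weight maximized at `55440` -/

/-- The thirtieth power of `σ(n)/n^{1+1/30}`. -/
def abundanceWeight (n : ℕ) : ℝ := ((sigma1 n : ℝ) / n) ^ 30 / n

lemma abundanceWeight_eq_prod {n : ℕ} (hn : n ≠ 0) :
    abundanceWeight n = ∏ p ∈ n.primeFactors, abundanceWeight (p ^ n.factorization p) := by
  refine Nat.multiplicative_factorization abundanceWeight (fun x y hxy => ?_) ?_ hn
  · simp only [abundanceWeight, sigma1_eq_sigma,
      ArithmeticFunction.isMultiplicative_sigma.map_mul_of_coprime hxy]
    push_cast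
    rw [mul_div_mul_comm, mul_pow, mul_div_mul_comm]
  · simp [abundanceWeight, sigma1]

lemma abundanceWeight_prime_pow {p : ℕ} (hp : p.Prime) (a : ℕ) :
    abundanceWeight (p ^ a) = ((∑ k ∈ range (a + 1), (p : ℝ) ^ k) / p ^ a) ^ 30 / p ^ a := by
  simp only [abundanceWeight, sigma1_eq_sigma, ArithmeticFunction.sigma_one_apply_prime_pow hp]
  push_cast
  rfl

lemma abundanceWeight_prime_pow_le {p : ℕ} (hp : p.Prime) {a b : ℕ} (hab : b ≤ a) :
    abundanceWeight (p ^ a) ≤ ((p : ℝ) / (p - 1)) ^ 30 / p ^ b := by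
  rw [abundanceWeight_prime_pow hp]
  have hp1 : (1 : ℝ) < p := by exact_mod_cast hp.one_lt
  have hp0 : (0 : ℝ) < p - 1 := by linarith
  gcongr ?_ ^ 30 / ?_
  · rw [geom_sum_eq hp1.ne', div_div, div_le_div_iff₀ (by positivity) hp0, pow_succ]
    nlinarith
  · exact pow_le_pow_right₀ hp1.le hab

/-- The maximum over `a` of the weight of `p ^ a`. -/
def maxWeight (p : ℕ) : ℝ :=
  if p = 2 then (31 / 16) ^ 30 / 16 else if p = 3 then (13 / 9) ^ 30 / 9 else
  if p = 5 then (6 / 5) ^ 30 / 5 else if p = 7 then (8 / 7) ^ 30 / 7 else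
  if p = 11 then (12 / 11) ^ 30 / 11 else 1

lemma one_le_maxWeight (p : ℕ) : 1 ≤ maxWeight p := by
  unfold maxWeight
  split_ifs <;> norm_num

lemma abundanceWeight_prime_pow_le_maxWeight {p : ℕ} (hp : p.Prime) (a : ℕ) :
    abundanceWeight (p ^ a) ≤ maxWeight p := by
  have small : ∀ b : ℕ,
      (∀ a < b, ((∑ k ∈ range (a + 1), (p : ℝ) ^ k) / p ^ a) ^ 30 / p ^ a ≤ maxWeight p) →
      ((p : ℝ) / (p - 1)) ^ 30 / p ^ b ≤ maxWeight p → abundanceWeight (p ^ a) ≤ maxWeight p := by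
    intro b hsmall hlarge
    rcases lt_or_ge a b with hab | hab
    · exact (abundanceWeight_prime_pow hp a).trans_le (hsmall a hab)
    · exact (abundanceWeight_prime_pow_le hp hab).trans hlarge
  by_cases hp13 : 13 ≤ p
  · have hmw : maxWeight p = 1 := by
      unfold maxWeight
      split_ifs <;> first | omega | rfl
    refine small 1 (fun a ha => ?_) ?_
    · interval_cases a
      simp [hmw]
    · have h13 : (13 : ℝ) ≤ p := by exact_mod_cast hp13
      have hp0 : (0 : ℝ) < p - 1 := by linarith
      have hle : (p : ℝ) / (p - 1) ≤ 13 / 12 := by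
        rw [div_le_div_iff₀ hp0 (by norm_num)]
        linarith
      rw [hmw, pow_one, div_le_one (by linarith)]
      calc ((p : ℝ) / (p - 1)) ^ 30 ≤ (13 / 12) ^ 30 := by gcongr
        _ ≤ 13 := by norm_num
        _ ≤ p := h13
  · have hcases : p = 2 ∨ p = 3 ∨ p = 5 ∨ p = 7 ∨ p = 11 := by
      push Not at hp13
      interval_cases p <;> first | (norm_num at hp; done) | norm_num
    rcases hcases with rfl | rfl | rfl | rfl | rfl
    · refine small 6 (fun a ha => ?_) ?_
      · interval_cases a <;> norm_num [maxWeight, Finset.sum_range_succ]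
      · norm_num [maxWeight]
    · refine small 4 (fun a ha => ?_) ?_
      · interval_cases a <;> norm_num [maxWeight, Finset.sum_range_succ]
      · norm_num [maxWeight]
    all_goals
      refine small 2 (fun a ha => ?_) ?_
      · interval_cases a <;> norm_num [maxWeight, Finset.sum_range_succ]
      · norm_num [maxWeight]

lemma abundanceWeight_le_prod {n : ℕ} (hn : n ≠ 0) {c : ℕ → ℝ} (hc1 : ∀ p, 1 ≤ c p)
    (hc : ∀ p, p.Prime → abundanceWeight (p ^ n.factorization p) ≤ c p)
    (hc13 : ∀ p, p ∉ ({2, 3, 5, 7, 11} : Finset ℕ) → c p = 1) :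
    abundanceWeight n ≤ ∏ p ∈ ({2, 3, 5, 7, 11} : Finset ℕ), c p := by
  calc abundanceWeight n
      = ∏ p ∈ n.primeFactors, abundanceWeight (p ^ n.factorization p) := abundanceWeight_eq_prod hn
    _ ≤ ∏ p ∈ n.primeFactors, c p := by
        refine Finset.prod_le_prod (fun p _ => ?_)
          fun p hp => hc p (Nat.prime_of_mem_primeFactors hp)
        unfold abundanceWeight
        positivity
    _ ≤ ∏ p ∈ n.primeFactors ∪ {2, 3, 5, 7, 11}, c p :=
        Finset.prod_le_prod_of_subset_of_one_le subset_union_left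
          (fun p _ => zero_le_one.trans (hc1 p)) fun p _ _ => hc1 p
    _ = ∏ p ∈ ({2, 3, 5, 7, 11} : Finset ℕ), c p :=
        (Finset.prod_subset subset_union_right fun p _ hp => hc13 p hp).symm

lemma maxWeight_eq_one {p : ℕ} (hp : p ∉ ({2, 3, 5, 7, 11} : Finset ℕ)) : maxWeight p = 1 := by
  simp only [Finset.mem_insert, Finset.mem_singleton, not_or] at hp
  simp [maxWeight, hp]

lemma prod_maxWeight :
    ∏ p ∈ ({2, 3, 5, 7, 11} : Finset ℕ), maxWeight p = (232128 / 55440) ^ 30 / 55440 := by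
  norm_num [maxWeight]

lemma sigma1_55440 : sigma1 55440 = 232128 := by
  rw [sigma1_eq_sigma, show 55440 = 2 ^ 4 * (3 ^ 2 * (5 ^ 1 * (7 ^ 1 * 11 ^ 1))) by norm_num]
  have hm := @ArithmeticFunction.isMultiplicative_sigma 1
  rw [hm.map_mul_of_coprime (by norm_num), hm.map_mul_of_coprime (by norm_num),
    hm.map_mul_of_coprime (by norm_num), hm.map_mul_of_coprime (by norm_num)]
  simp only [ArithmeticFunction.sigma_one_apply_prime_pow (by norm_num : Nat.Prime 2),
    ArithmeticFunction.sigma_one_apply_prime_pow (by norm_num : Nat.Prime 3),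
    ArithmeticFunction.sigma_one_apply_prime_pow (by norm_num : Nat.Prime 5),
    ArithmeticFunction.sigma_one_apply_prime_pow (by norm_num : Nat.Prime 7),
    ArithmeticFunction.sigma_one_apply_prime_pow (by norm_num : Nat.Prime 11)]
  decide

lemma abundanceWeight_eq_rpow {n : ℕ} (hn : 0 < n) :
    ((sigma1 n : ℝ) / (n : ℝ) ^ ((1 : ℝ) + 1 / 30)) ^ 30 = abundanceWeight n := by
  have hn' : (0 : ℝ) < n := by exact_mod_cast hn
  have h : ((n : ℝ) ^ ((1 : ℝ) / 30)) ^ 30 = n := by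
    rw [← rpow_natCast, ← rpow_mul hn'.le]
    norm_num
  rw [rpow_add hn', rpow_one, ← div_div, div_pow, h, abundanceWeight]

lemma colossallyAbundant_55440 : ColossallyAbundant 55440 := by
  refine ⟨by norm_num, 1 / 30, by norm_num, fun m hm => ?_⟩
  refine le_of_pow_le_pow_left₀ (n := 30) (by norm_num)
    (div_nonneg (Nat.cast_nonneg _) (rpow_nonneg (Nat.cast_nonneg _) _)) ?_
  rw [abundanceWeight_eq_rpow (by omega), abundanceWeight_eq_rpow (by norm_num)]
  calc abundanceWeight m ≤ ∏ p ∈ ({2, 3, 5, 7, 11} : Finset ℕ), maxWeight p :=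
        abundanceWeight_le_prod (by omega) one_le_maxWeight
          (fun p hp => abundanceWeight_prime_pow_le_maxWeight hp _) fun p => maxWeight_eq_one
    _ = abundanceWeight 55440 := by
        rw [prod_maxWeight, abundanceWeight, sigma1_55440]
        norm_num

/-! ### No extremely abundant number lies strictly between `10080` and `55440` -/

lemma abundanceWeight_le_of_prime_pow_le {n q : ℕ} (hn : n ≠ 0) {c : ℝ} (hc1 : 1 ≤ c)
    (hq : q ∈ ({2, 3, 5, 7, 11} : Finset ℕ)) (hc : abundanceWeight (q ^ n.factorization q) ≤ c) :
    abundanceWeight n ≤ c * ((232128 / 55440) ^ 30 / 55440) / maxWeight q := by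
  have h := abundanceWeight_le_prod hn (c := Function.update maxWeight q c) (fun p => ?_)
    (fun p hp => ?_) (fun p hp => ?_)
  · rw [Finset.prod_update_of_mem hq] at h
    rw [← prod_maxWeight, ← Finset.mul_prod_erase _ _ hq, Finset.erase_eq]
    have := one_le_maxWeight q
    rwa [mul_left_comm, mul_div_cancel_left₀ _ (by positivity)]
  · rcases eq_or_ne p q with rfl | hpq
    · simpa using hc1
    · simpa [hpq] using one_le_maxWeight p
  · rcases eq_or_ne p q with rfl | hpq
    · simpa using hc
    · simpa [hpq] using abundanceWeight_prime_pow_le_maxWeight hp _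
  · rw [Function.update_of_ne (by rintro rfl; exact hp hq), maxWeight_eq_one hp]

lemma sigma1_div_pow_le_of_not_840_dvd {n : ℕ} (hn : n ≠ 0) (h840 : ¬ 840 ∣ n) :
    ((sigma1 n : ℝ) / n) ^ 30 ≤ (3961 / 1000) ^ 30 / 55440 * n := by
  have hn' : (0 : ℝ) < n := by exact_mod_cast Nat.pos_of_ne_zero hn
  rw [← div_le_iff₀ hn', ← abundanceWeight]
  have of_not_dvd : ∀ q : ℕ, ¬ q ∣ n → abundanceWeight (q ^ n.factorization q) ≤ 1 := by
    intro q hq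
    simp [Nat.factorization_eq_zero_of_not_dvd hq, abundanceWeight, sigma1]
  by_cases h3 : 3 ∣ n
  swap
  · refine (abundanceWeight_le_of_prime_pow_le hn le_rfl (by simp) (of_not_dvd 3 h3)).trans ?_
    norm_num [maxWeight]
  by_cases h5 : 5 ∣ n
  swap
  · refine (abundanceWeight_le_of_prime_pow_le hn le_rfl (by simp) (of_not_dvd 5 h5)).trans ?_
    norm_num [maxWeight]
  by_cases h7 : 7 ∣ n
  swap
  · refine (abundanceWeight_le_of_prime_pow_le hn le_rfl (by simp) (of_not_dvd 7 h7)).trans ?_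
    norm_num [maxWeight]
  have h8 : ¬ 2 ^ 3 ∣ n := by omega
  have hv : n.factorization 2 < 3 := by
    by_contra! hle
    exact h8 ((Nat.prime_two.pow_dvd_iff_le_factorization hn).2 hle)
  have hw : abundanceWeight (2 ^ n.factorization 2) ≤ (7 / 4) ^ 30 / 4 := by
    rw [abundanceWeight_prime_pow Nat.prime_two]
    interval_cases n.factorization 2 <;> norm_num [Finset.sum_range_succ]
  refine (abundanceWeight_le_of_prime_pow_le hn (by norm_num) (by simp) hw).trans ?_
  norm_num [maxWeight]

lemma sigma1_le_sum_small_divisors {n b : ℕ} (hb : n < b * b) :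
    sigma1 n ≤ ∑ d ∈ range b, if d * d ≤ n ∧ n % d = 0 then d + n / d else 0 := by
  have mem_range_of_sq_le : ∀ d, d * d ≤ n → d ∈ range b := fun d hd =>
    Finset.mem_range.2 (lt_of_mul_self_lt_mul_self₀ b.zero_le (hd.trans_lt hb))
  rw [← Finset.sum_filter, Finset.sum_add_distrib]
  set S := {d ∈ range b | d * d ≤ n ∧ n % d = 0} with hS
  rw [sigma1, ← Finset.sum_filter_add_sum_filter_not n.divisors (fun d => d * d ≤ n)]
  refine add_le_add (Finset.sum_le_sum_of_subset fun d hd => ?_) ?_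
  · simp only [Finset.mem_filter, Nat.mem_divisors] at hd
    exact Finset.mem_filter.2
      ⟨mem_range_of_sq_le d hd.2, hd.2, Nat.mod_eq_zero_of_dvd hd.1.1⟩
  · have hsub : {d ∈ n.divisors | ¬ d * d ≤ n} ⊆ S.image (n / ·) := by
      intro d hd
      simp only [Finset.mem_filter, Nat.mem_divisors] at hd
      obtain ⟨⟨⟨e, rfl⟩, hne⟩, hde⟩ := hd
      have he0 : 0 < e := Nat.pos_of_ne_zero (right_ne_zero_of_mul hne)
      have hed : e < d := lt_of_mul_lt_mul_left (not_le.1 hde) d.zero_le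
      have hee : e * e ≤ d * e := Nat.mul_le_mul_right e hed.le
      refine Finset.mem_image.2 ⟨e, ?_, Nat.mul_div_cancel d he0⟩
      exact Finset.mem_filter.2 ⟨mem_range_of_sq_le e hee, hee, Nat.mul_mod_left d e⟩
    calc ∑ d ∈ n.divisors with ¬ d * d ≤ n, id d ≤ ∑ d ∈ S.image (n / ·), id d :=
          Finset.sum_le_sum_of_subset hsub
      _ ≤ ∑ d ∈ S, n / d := Finset.sum_image_le_of_nonneg fun _ _ => Nat.zero_le _

lemma sum_small_divisors_840_mul :
    ∀ k < 66, 12 < k →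
      (∑ d ∈ range 237,
        if d * d ≤ 840 * k ∧ 840 * k % d = 0 then d + 840 * k / d else 0) * 100 ≤
      (if k < 18 then 390 else if k < 33 then 397 else 406) * (840 * k) := by
  decide +kernel

/-- Piecewise constant upper bound for `σ(n)/n` on the range `10080 < n < 55440`. -/
lemma sigma1_le_of_lt_55440 {n : ℕ} (h₁ : 10080 < n) (h₂ : n < 55440) :
    sigma1 n * 100 ≤ (if n < 15120 then 390 else if n < 27720 then 397 else 406) * n := by
  by_cases h840 : 840 ∣ n
  · obtain ⟨k, rfl⟩ := h840
    have hs := sigma1_le_sum_small_divisors (n := 840 * k) (b := 237) (by omega)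
    have hk := sum_small_divisors_840_mul k (by omega) (by omega)
    refine (Nat.mul_le_mul_right 100 hs).trans (hk.trans (Nat.mul_le_mul_right _ ?_))
    split_ifs <;> omega
  · have hB := sigma1_div_pow_le_of_not_840_dvd (by omega) h840
    have hn : (0 : ℝ) < n := by exact_mod_cast (by omega : 0 < n)
    have key : ∀ c u : ℕ, n < u → (3961 / 1000 : ℝ) ^ 30 / 55440 * u ≤ (c / 100 : ℝ) ^ 30 →
        sigma1 n * 100 ≤ c * n := by
      intro c u hu hc
      have hu' : (n : ℝ) ≤ u := by exact_mod_cast hu.le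
      have hle : (sigma1 n : ℝ) / n ≤ c / 100 := by
        refine le_of_pow_le_pow_left₀ (n := 30) (by norm_num) (by positivity) ?_
        refine hB.trans (le_trans ?_ hc)
        gcongr
      rw [div_le_div_iff₀ hn (by norm_num)] at hle
      exact_mod_cast hle
    split_ifs with h₃ h₄
    · exact key 390 15120 h₃ (by norm_num)
    · exact key 397 27720 h₄ (by norm_num)
    · exact key 406 55440 h₂ (by norm_num)

lemma log_le_div_of_pow_le {x : ℝ} (hx : 0 < x) {a b : ℕ} (hb : 0 < b)
    (h : x ^ b ≤ 2.7182818283 ^ a) : log x ≤ a / b := by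
  have hb' : (0 : ℝ) < b := by exact_mod_cast hb
  rw [le_div_iff₀ hb', mul_comm, ← log_pow, log_le_iff_le_exp (by positivity),
    ← mul_one (a : ℝ), exp_nat_mul]
  exact h.trans (pow_le_pow_left₀ (by norm_num) exp_one_gt_d9.le a)

lemma div_le_log_of_le_pow {x : ℝ} (hx : 0 < x) {a b : ℕ} (hb : 0 < b)
    (h : 2.7182818286 ^ a ≤ x ^ b) : (a : ℝ) / b ≤ log x := by
  have hb' : (0 : ℝ) < b := by exact_mod_cast hb
  rw [div_le_iff₀ hb', mul_comm, ← log_pow, le_log_iff_exp_le (by positivity),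
    ← mul_one (a : ℝ), exp_nat_mul]
  exact (pow_le_pow_left₀ (exp_pos 1).le exp_one_lt_d9.le a).trans h

lemma log_log_10080_le : log (log 10080) ≤ 20 / 9 := by
  have h₁ : log (10080 : ℝ) ≤ 83 / 9 :=
    log_le_div_of_pow_le (a := 83) (b := 9) (by norm_num) (by norm_num) (by norm_num)
  refine (log_le_log (log_pos (by norm_num)) h₁).trans ?_
  exact log_le_div_of_pow_le (a := 20) (b := 9) (by norm_num) (by norm_num) (by norm_num)

lemma le_log_log_15120 : 43 / 19 ≤ log (log 15120) := by
  have h₁ : 125 / 13 ≤ log (15120 : ℝ) :=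
    div_le_log_of_le_pow (a := 125) (b := 13) (by norm_num) (by norm_num) (by norm_num)
  refine le_trans ?_ (log_le_log (by norm_num) h₁)
  exact div_le_log_of_le_pow (a := 43) (b := 19) (by norm_num) (by norm_num) (by norm_num)

lemma le_log_log_27720 : 58 / 25 ≤ log (log 27720) := by
  have h₁ : 51 / 5 ≤ log (27720 : ℝ) :=
    div_le_log_of_le_pow (a := 51) (b := 5) (by norm_num) (by norm_num) (by norm_num)
  refine le_trans ?_ (log_le_log (by norm_num) h₁)
  exact div_le_log_of_le_pow (a := 58) (b := 25) (by norm_num) (by norm_num) (by norm_num)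

lemma sigma1_10080 : sigma1 10080 = 39312 := by
  rw [sigma1_eq_sigma, show 10080 = 2 ^ 5 * (3 ^ 2 * (5 ^ 1 * 7 ^ 1)) by norm_num]
  have hm := @ArithmeticFunction.isMultiplicative_sigma 1
  rw [hm.map_mul_of_coprime (by norm_num), hm.map_mul_of_coprime (by norm_num),
    hm.map_mul_of_coprime (by norm_num)]
  simp only [ArithmeticFunction.sigma_one_apply_prime_pow (by norm_num : Nat.Prime 2),
    ArithmeticFunction.sigma_one_apply_prime_pow (by norm_num : Nat.Prime 3),
    ArithmeticFunction.sigma_one_apply_prime_pow (by norm_num : Nat.Prime 5),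
    ArithmeticFunction.sigma_one_apply_prime_pow (by norm_num : Nat.Prime 7)]
  decide

lemma robinF_le_robinF_10080 {n : ℕ} (h₁ : 10080 < n) (h₂ : n < 55440) :
    robinF n ≤ robinF 10080 := by
  have hn : (0 : ℝ) < n := by exact_mod_cast (by omega : 0 < n)
  have hL := log_pos (one_lt_log_of_three_le (by omega : 3 ≤ n))
  have hL0 : 0 < log (log (10080 : ℝ)) := by
    exact_mod_cast log_pos (one_lt_log_of_three_le (by norm_num : 3 ≤ 10080))
  have hmono : ∀ a : ℕ, 3 ≤ a → a ≤ n → log (log (a : ℝ)) ≤ log (log n) := by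
    intro a ha han
    have ha1 := one_lt_log_of_three_le ha
    exact log_le_log (by linarith) (log_le_log (by exact_mod_cast (by omega : 0 < a))
      (by exact_mod_cast han))
  have key : ∀ c : ℕ, sigma1 n * 100 ≤ c * n → c * log (log 10080) ≤ 390 * log (log n) →
      robinF n ≤ robinF 10080 := by
    intro c hc hlog
    have hc' : (sigma1 n : ℝ) * 100 ≤ c * n := by exact_mod_cast hc
    rw [robinF, robinF, sigma1_10080, Nat.cast_ofNat, Nat.cast_ofNat,
      div_le_div_iff₀ (by positivity) (by positivity)]
    nlinarith [mul_le_mul_of_nonneg_right hc' hL0.le, mul_le_mul_of_nonneg_left hlog hn.le]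
  have hs := sigma1_le_of_lt_55440 h₁ h₂
  have hlog := log_log_10080_le
  split_ifs at hs with h₃ h₄
  · have := hmono 10080 (by norm_num) h₁.le
    push_cast at this
    exact key 390 hs (by push_cast; linarith)
  · have := hmono 15120 (by norm_num) (by omega)
    have := le_log_log_15120
    push_cast at *
    exact key 397 hs (by push_cast; linarith)
  · have := hmono 27720 (by norm_num) (by omega)
    have := le_log_log_27720
    push_cast at *
    exact key 406 hs (by push_cast; linarith)

theorem next_CA_is_XA
    (N N' : ℕ) (hN : ColossallyAbundant N) (hN' : ColossallyAbundant N')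
    (hlt : N < N') (hcons : ∀ m : ℕ, N < m → m < N' → ¬ ColossallyAbundant m)
    (h3 : 3 ≤ N)
    (n : ℕ) (hn : ExtremelyAbundant n) (hn1 : 10080 < n)
    (hNn : N < n) (hnN' : n < N')
    (hrobin : ∀ m : ℕ, N ≤ m → m ≤ N' → robinF m ≤ max (robinF N) (robinF N')) :
    ExtremelyAbundant N' := by
  obtain rfl | ⟨-, hmax⟩ := hn
  · omega
  have hN0 : 10080 ≤ N := by
    by_contra! hlt0
    have hle : N' ≤ 55440 := by
      by_contra! hcon
      exact hcons 55440 (by omega) hcon colossallyAbundant_55440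
    exact (hmax 10080 le_rfl hn1).not_ge (robinF_le_robinF_10080 hn1 (by omega))
  have hfN : robinF N < robinF n := hmax N hN0 hNn
  have hfn : robinF n < robinF N' :=
    (lt_max_iff.1 (robinF_lt_max hN hN' hcons h3 hNn hnN')).resolve_left hfN.not_gt
  refine Or.inr ⟨by omega, fun m hm hmN' => ?_⟩
  rcases lt_or_ge m n with hmn | hmn
  · exact (hmax m hm hmn).trans hfn
  · have h := robinF_lt_max hN hN' hcons h3 (hNn.trans_le hmn) hmN'
    rwa [max_eq_right (hfN.trans hfn).le] at h
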